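/- arXiv:1101.1800 — 2 statements merged into one kernel-verified Lean document; each statement's English description precedes it below -/
import Mathlib

section
/- For every Dedekind cut (A,B), one has sup ι(A) ∼ inf ι(B), i.e. the least upper bound in (𝓡,⪯) of the set {ι(a) : a ∈ A} is equivalent to the greatest lower bound of the set {ι(b) : b ∈ B}. -/
/-- The ambient space `𝓡` of decimal representations: an integer part together
with a sequence of digits in `{0,…,9}`. -/
abbrev DecimalRep := ℤ × (ℕ → Fin 10)

namespace DecimalRep

open scoped Classical

/-- The truncation `[x]_k = x₀ + ∑_{i=1}^k x_i / 10^i` of `x` up to the `k`-th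
digit, as a rational number. -/
def trunc (x : DecimalRep) (k : ℕ) : ℚ :=
  (x.1 : ℚ) + ∑ i ∈ Finset.range k, ((x.2 i : ℕ) : ℚ) / 10 ^ (i + 1)

/-- The order `⪯` on `𝓡`: `x ⪯ y` iff every truncation of `x` is at most the
corresponding truncation of `y`. -/
def le (x y : DecimalRep) : Prop := ∀ k : ℕ, trunc x k ≤ trunc y k

/-- The strict order `≺` on `𝓡`. -/
def lt (x y : DecimalRep) : Prop := le x y ∧ x ≠ y

/-- Two decimal representations are equivalent ("have no gap") iff there is no
third element lying between them. -/
def equiv (x y : DecimalRep) : Prop :=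
  ¬ ∃ z : DecimalRep, z ≠ x ∧ z ≠ y ∧
      ((le x z ∧ le z y) ∨ (le y z ∧ le z x))

/-- `𝓡₉`: decimal representations ending in an infinite string of nines. -/
def allNines (x : DecimalRep) : Prop := ∃ N : ℕ, ∀ k ≥ N, x.2 k = 9

/-- `ℚ_F`: decimal representations ending in an infinite string of zeros. -/
def finiteDec (x : DecimalRep) : Prop := ∃ N : ℕ, ∀ k ≥ N, x.2 k = 0

/-- The decimal expansion map `ι : ℚ → 𝓡`, satisfying
`[ι(α)]_k = ⌊10^k·α⌋/10^k` for all `k`. -/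
def iota (α : ℚ) : DecimalRep :=
  (⌊α⌋, fun k => ⟨(⌊α * 10 ^ (k + 1)⌋ % 10).toNat, by
    have h1 : (0 : ℤ) ≤ ⌊α * 10 ^ (k + 1)⌋ % 10 := Int.emod_nonneg _ (by norm_num)
    have h2 : ⌊α * 10 ^ (k + 1)⌋ % 10 < 10 := Int.emod_lt_of_pos _ (by norm_num)
    omega⟩)

/-- `M` is a least upper bound of `W` in `(𝓡,⪯)`. -/
def IsLub (W : Set DecimalRep) (M : DecimalRep) : Prop :=
  (∀ w ∈ W, le w M) ∧ ∀ M' : DecimalRep, (∀ w ∈ W, le w M') → le M M'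

/-- `M` is a greatest lower bound of `W` in `(𝓡,⪯)`. -/
def IsGlb (W : Set DecimalRep) (M : DecimalRep) : Prop :=
  (∀ w ∈ W, le M w) ∧ ∀ M' : DecimalRep, (∀ w ∈ W, le M' w) → le M' M

/-- The least upper bound of a set in `(𝓡,⪯)` (junk value if none exists). -/
noncomputable def sup (W : Set DecimalRep) : DecimalRep :=
  if h : ∃ M, IsLub W M then h.choose else default

/-- The greatest lower bound of a set in `(𝓡,⪯)` (junk value if none exists). -/
noncomputable def inf (W : Set DecimalRep) : DecimalRep :=
  if h : ∃ M, IsGlb W M then h.choose else default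

/-- Addition `x ⊕ y := sup {ι([x]_k + [y]_k) : k ∈ ℕ}` on `𝓡`. -/
noncomputable def add (x y : DecimalRep) : DecimalRep :=
  sup { z | ∃ k : ℕ, z = iota (trunc x k + trunc y k) }

/-- The "additive inverse" map `Ψ(x₀.x₁x₂⋯) = (−1−x₀).(9−x₁)(9−x₂)⋯`. -/
def psi (x : DecimalRep) : DecimalRep :=
  (-1 - x.1, fun k => ⟨9 - (x.2 k).val, by have := (x.2 k).isLt; omega⟩)

/-- The signal map: `0` on the nonnegative part, `1` on the negative part. -/
noncomputable def sign (x : DecimalRep) : ℕ :=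
  if le (iota 0) x then 0 else 1

/-- The absolute value `‖x‖ := max {x, Ψ(x)}` with respect to `⪯`. -/
noncomputable def norm (x : DecimalRep) : DecimalRep :=
  if le x (psi x) then psi x else x

/-- Multiplication
`x ⊗ y := Ψ^(sign x + sign y) (sup {ι([‖x‖]_k · [‖y‖]_k) : k ∈ ℕ})` on `𝓡`. -/
noncomputable def mul (x y : DecimalRep) : DecimalRep :=
  psi^[sign x + sign y]
    (sup { z | ∃ k : ℕ, z = iota (trunc (norm x) k * trunc (norm y) k) })

/-- The multiplicative inverse
`x⁻¹ := Ψ^(sign x) (inf {ι(1/[‖x‖]_k) : k ∈ ℕ, [‖x‖]_k > 0})`. -/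
noncomputable def inv (x : DecimalRep) : DecimalRep :=
  psi^[sign x]
    (inf { z | ∃ k : ℕ, 0 < trunc (norm x) k ∧ z = iota (1 / trunc (norm x) k) })

/-- A sequence of rationals is Cauchy. -/
def IsCauchy (x : ℕ → ℚ) : Prop :=
  ∀ ε : ℚ, 0 < ε → ∃ N : ℕ, ∀ m n : ℕ, N ≤ m → N ≤ n → |x m - x n| < ε

/-- The upper limit `inf { sup {f k : k ≥ n} : n ∈ ℕ }` of a sequence in `𝓡`. -/
noncomputable def upperLimit (f : ℕ → DecimalRep) : DecimalRep :=
  inf { z | ∃ n : ℕ, z = sup { w | ∃ k : ℕ, n ≤ k ∧ w = f k } }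

/-- The lower limit `sup { inf {f k : k ≥ n} : n ∈ ℕ }` of a sequence in `𝓡`. -/
noncomputable def lowerLimit (f : ℕ → DecimalRep) : DecimalRep :=
  sup { z | ∃ n : ℕ, z = inf { w | ∃ k : ℕ, n ≤ k ∧ w = f k } }

end DecimalRep

/-!
Decimal representations are the compatible sequences of integers for the maps
`ℤ ← ℤ ← ℤ ← ⋯` given by `t ↦ ⌊t / 10⌋`: the `k`-th entry is `10 ^ k * [x]_k`, and `⪯` is the
entrywise order. As `t ↦ ⌊t / 10⌋` is monotone, suprema are entrywise maxima; infima are their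
mirror images under `Ψ`, which acts on entries as `t ↦ -1 - t`.
Whichever side of the cut contains `(n + 1) / 10 ^ k`, where `n` is the `k`-th entry of `sup ι(A)`,
the `k`-th entry of `inf ι(B)` is at most `n + 1`. A third element strictly in between
would, for large `k`, have to fit strictly between two integers at distance at most one.
-/

namespace DecimalRep

open Filter

/-- The integer `10 ^ k * [x]_k`, the entry at level `k` of the compatible sequence of
integers attached to `x`. The recursion avoids rational arithmetic when truncations are compared. -/
def truncNum (x : DecimalRep) : ℕ → ℤ
  | 0 => x.1
  | k + 1 => 10 * truncNum x k + (x.2 k : ℕ)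

theorem truncNum_succ (x : DecimalRep) (k : ℕ) :
    truncNum x (k + 1) = 10 * truncNum x k + (x.2 k : ℕ) := rfl

theorem trunc_eq_truncNum_div (x : DecimalRep) (k : ℕ) : trunc x k = truncNum x k / 10 ^ k := by
  induction k with
  | zero => simp [trunc, truncNum]
  | succ k ih =>
    calc trunc x (k + 1) = trunc x k + ((x.2 k : ℕ) : ℚ) / 10 ^ (k + 1) := by
          simp only [trunc, Finset.sum_range_succ, add_assoc]
      _ = truncNum x (k + 1) / 10 ^ (k + 1) := by
          rw [ih, truncNum_succ]
          push_cast
          field_simp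
          ring

theorem le_iff_truncNum_le {x y : DecimalRep} : le x y ↔ ∀ k, truncNum x k ≤ truncNum y k :=
  forall_congr' fun k => by
    rw [trunc_eq_truncNum_div, trunc_eq_truncNum_div,
      div_le_div_iff_of_pos_right (by positivity), Int.cast_le]

theorem truncNum_injective : Function.Injective truncNum := by
  intro x y h
  refine Prod.ext (congrFun h 0) (funext fun k => Fin.ext ?_)
  have hk := congrFun h k
  have hk' := congrFun h (k + 1)
  simp only [truncNum_succ] at hk'
  omega

theorem le.antisymm {x y : DecimalRep} (hxy : le x y) (hyx : le y x) : x = y :=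
  truncNum_injective <| funext fun k =>
    le_antisymm (le_iff_truncNum_le.1 hxy k) (le_iff_truncNum_le.1 hyx k)

theorem truncNum_succ_ediv_ten (x : DecimalRep) (k : ℕ) :
    truncNum x (k + 1) / 10 = truncNum x k := by
  have hdigit := (x.2 k).isLt
  rw [truncNum_succ]
  omega

theorem exists_truncNum_eq {t : ℕ → ℤ} (ht : ∀ k, t (k + 1) / 10 = t k) :
    ∃ x : DecimalRep, truncNum x = t := by
  refine ⟨(t 0, fun k => ⟨(t (k + 1) % 10).toNat, by omega⟩), funext fun k => ?_⟩
  induction k with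
  | zero => rfl
  | succ k ih =>
    rw [truncNum_succ, ih]
    have hk := ht k
    dsimp only
    omega

theorem truncNum_lt_truncNum_of_le {x y : DecimalRep} {m n : ℕ} (h : truncNum x m < truncNum y m)
    (hmn : m ≤ n) : truncNum x n < truncNum y n := by
  induction n, hmn using Nat.le_induction with
  | base => exact h
  | succ n _ ih =>
    rw [← truncNum_succ_ediv_ten x, ← truncNum_succ_ediv_ten y] at ih
    omega

theorem lt.eventually_truncNum_lt {x y : DecimalRep} (h : lt x y) :
    ∀ᶠ k in atTop, truncNum x k < truncNum y k := by
  obtain ⟨m, hm⟩ := Function.ne_iff.1 (truncNum_injective.ne h.2)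
  filter_upwards [eventually_ge_atTop m] with k hk
  exact truncNum_lt_truncNum_of_le ((le_iff_truncNum_le.1 h.1 m).lt_of_ne hm) hk

theorem equiv_of_truncNum_le_add_one {x y : DecimalRep} (hxy : le x y)
    (hyx : ∀ k, truncNum y k ≤ truncNum x k + 1) : equiv x y := by
  rintro ⟨z, hzx, hzy, ⟨hxz, hzy'⟩ | ⟨hyz, hzx'⟩⟩
  · have hxz_lt : lt x z := ⟨hxz, hzx.symm⟩
    have hzy_lt : lt z y := ⟨hzy', hzy⟩
    obtain ⟨k, hxzk, hzyk⟩ :=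
      (hxz_lt.eventually_truncNum_lt.and hzy_lt.eventually_truncNum_lt).exists
    have hyxk := hyx k
    omega
  · refine hzx (hzx'.antisymm (le_iff_truncNum_le.2 fun k => ?_))
    exact (le_iff_truncNum_le.1 hxy k).trans (le_iff_truncNum_le.1 hyz k)

theorem truncNum_iota (α : ℚ) (k : ℕ) : truncNum (iota α) k = ⌊α * 10 ^ k⌋ := by
  induction k with
  | zero => simp [truncNum, iota]
  | succ k ih =>
    have hdigit : (((iota α).2 k : ℕ) : ℤ) = ⌊α * 10 ^ (k + 1)⌋ % 10 :=
      Int.toNat_of_nonneg (Int.emod_nonneg _ (by norm_num))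
    have hfloor : ⌊α * 10 ^ k⌋ = ⌊α * 10 ^ (k + 1)⌋ / 10 := by
      rw [← Nat.cast_ofNat (R := ℤ), ← Int.floor_div_natCast, pow_succ, ← mul_assoc,
        Nat.cast_ofNat, mul_div_cancel_right₀ _ (by norm_num)]
    rw [truncNum_succ, ih, hdigit, hfloor, Int.mul_ediv_add_emod]

theorem truncNum_iota_div (n : ℤ) (k : ℕ) : truncNum (iota (n / 10 ^ k)) k = n := by
  rw [truncNum_iota, div_mul_cancel₀ _ (by positivity), Int.floor_intCast]

theorem iota_mono {α β : ℚ} (h : α ≤ β) : le (iota α) (iota β) :=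
  le_iff_truncNum_le.2 fun k => by
    rw [truncNum_iota, truncNum_iota]
    gcongr

theorem sup_eq_of_isLub {W : Set DecimalRep} {M : DecimalRep} (hM : IsLub W M) : sup W = M := by
  have hsup : IsLub W (sup W) := by
    rw [sup, dif_pos ⟨M, hM⟩]
    exact Exists.choose_spec _
  exact (hsup.2 M hM.1).antisymm (hM.2 _ hsup.1)

theorem inf_eq_of_isGlb {W : Set DecimalRep} {M : DecimalRep} (hM : IsGlb W M) : inf W = M := by
  have hinf : IsGlb W (inf W) := by
    rw [inf, dif_pos ⟨M, hM⟩]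
    exact Exists.choose_spec _
  exact (hM.2 _ hinf.1).antisymm (hinf.2 M hM.1)

theorem isLub_of_isGreatest_truncNum {W : Set DecimalRep} {M : DecimalRep}
    (hM : ∀ k, IsGreatest ((truncNum · k) '' W) (truncNum M k)) : IsLub W M := by
  refine ⟨fun w hw => le_iff_truncNum_le.2 fun k => (hM k).2 ⟨w, hw, rfl⟩, fun M' hM' =>
    le_iff_truncNum_le.2 fun k => ?_⟩
  obtain ⟨w, hw, hwk⟩ := (hM k).1
  exact hwk ▸ le_iff_truncNum_le.1 (hM' w hw) k

theorem exists_isGreatest_truncNum {W : Set DecimalRep} (hW : W.Nonempty) {u : DecimalRep}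
    (hu : ∀ w ∈ W, le w u) :
    ∃ M : DecimalRep, ∀ k, IsGreatest ((truncNum · k) '' W) (truncNum M k) := by
  have hbdd (k : ℕ) : BddAbove ((truncNum · k) '' W) :=
    ⟨truncNum u k, Set.forall_mem_image.2 fun w hw => le_iff_truncNum_le.1 (hu w hw) k⟩
  choose t ht using fun k => (hbdd k).exists_isGreatest_of_nonempty (hW.image _)
  have hcompat (k : ℕ) : t (k + 1) / 10 = t k := by
    have hdiv : Monotone fun n : ℤ => n / 10 := fun _ _ h => Int.ediv_le_ediv (by norm_num) h
    have himage := hdiv.map_isGreatest (ht (k + 1))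
    simp only [Set.image_image, truncNum_succ_ediv_ten] at himage
    exact himage.unique (ht k)
  obtain ⟨M, rfl⟩ := exists_truncNum_eq hcompat
  exact ⟨M, ht⟩

theorem isGreatest_truncNum_sup {W : Set DecimalRep} (hW : W.Nonempty) {u : DecimalRep}
    (hu : ∀ w ∈ W, le w u) (k : ℕ) :
    IsGreatest ((truncNum · k) '' W) (truncNum (sup W) k) := by
  obtain ⟨M, hM⟩ := exists_isGreatest_truncNum hW hu
  rw [sup_eq_of_isLub (isLub_of_isGreatest_truncNum hM)]
  exact hM k

theorem isLub_sup {W : Set DecimalRep} (hW : W.Nonempty) {u : DecimalRep}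
    (hu : ∀ w ∈ W, le w u) : IsLub W (sup W) :=
  isLub_of_isGreatest_truncNum (isGreatest_truncNum_sup hW hu)

theorem truncNum_psi (x : DecimalRep) (k : ℕ) : truncNum (psi x) k = -1 - truncNum x k := by
  induction k with
  | zero => rfl
  | succ k ih =>
    have hdigit := (x.2 k).isLt
    rw [truncNum_succ, truncNum_succ, ih]
    dsimp only [psi]
    omega

theorem psi_le_comm {x y : DecimalRep} : le (psi x) y ↔ le (psi y) x := by
  simp only [le_iff_truncNum_le, truncNum_psi]
  exact forall_congr' fun k => by omega

theorem le_psi_comm {x y : DecimalRep} : le x (psi y) ↔ le y (psi x) := by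
  simp only [le_iff_truncNum_le, truncNum_psi]
  exact forall_congr' fun k => by omega

theorem psi_le_psi_iff {x y : DecimalRep} : le (psi x) (psi y) ↔ le y x := by
  simp only [le_iff_truncNum_le, truncNum_psi]
  exact forall_congr' fun k => by omega

theorem forall_mem_psi_image_le {W : Set DecimalRep} {l : DecimalRep} (hl : ∀ w ∈ W, le l w) :
    ∀ w ∈ psi '' W, le w (psi l) :=
  Set.forall_mem_image.2 fun w hw => psi_le_psi_iff.2 (hl w hw)

theorem IsLub.isGlb_psi {W : Set DecimalRep} {M : DecimalRep} (hM : IsLub (psi '' W) M) :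
    IsGlb W (psi M) :=
  ⟨fun w hw => psi_le_comm.1 (hM.1 _ ⟨w, hw, rfl⟩), fun _ hl =>
    le_psi_comm.1 (hM.2 _ (forall_mem_psi_image_le hl))⟩

theorem inf_eq_psi_sup {W : Set DecimalRep} (hW : W.Nonempty) {l : DecimalRep}
    (hl : ∀ w ∈ W, le l w) : inf W = psi (sup (psi '' W)) :=
  inf_eq_of_isGlb (isLub_sup (hW.image psi) (forall_mem_psi_image_le hl)).isGlb_psi

theorem isGlb_inf {W : Set DecimalRep} (hW : W.Nonempty) {l : DecimalRep}
    (hl : ∀ w ∈ W, le l w) : IsGlb W (inf W) := by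
  rw [inf_eq_psi_sup hW hl]
  exact (isLub_sup (hW.image psi) (forall_mem_psi_image_le hl)).isGlb_psi

theorem isLeast_truncNum_inf {W : Set DecimalRep} (hW : W.Nonempty) {l : DecimalRep}
    (hl : ∀ w ∈ W, le l w) (k : ℕ) :
    IsLeast ((truncNum · k) '' W) (truncNum (inf W) k) := by
  have hreflect : Antitone fun n : ℤ => -1 - n := fun _ _ h => sub_le_sub_left h _
  have himage := hreflect.map_isGreatest
    (isGreatest_truncNum_sup (hW.image psi) (forall_mem_psi_image_le hl) k)
  simp only [Set.image_image, truncNum_psi, sub_sub_cancel] at himage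
  rwa [inf_eq_psi_sup hW hl, truncNum_psi]

theorem sup_le_inf {V W : Set DecimalRep} (hV : V.Nonempty) (hW : W.Nonempty)
    (h : ∀ v ∈ V, ∀ w ∈ W, le v w) : le (sup V) (inf W) :=
  (isLub_sup hV fun v hv => h v hv _ hW.some_mem).2 _ fun v hv =>
    (isGlb_inf hW (h _ hV.some_mem)).2 v (h v hv)

end DecimalRep

open DecimalRep in
theorem sup_equiv_inf_of_dedekind_cut_general (A B : Set ℚ)
    (hA : A.Nonempty) (hB : B.Nonempty)
    (hdecimal : ∀ (n : ℤ) (k : ℕ), (n / 10 ^ k : ℚ) ∈ A ∪ B)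
    (hle : ∀ a ∈ A, ∀ b ∈ B, a ≤ b) :
    equiv (sup (iota '' A)) (inf (iota '' B)) := by
  have hAB : ∀ x ∈ iota '' A, ∀ y ∈ iota '' B, le x y :=
    Set.forall_mem_image.2 fun a ha => Set.forall_mem_image.2 fun b hb => iota_mono (hle a ha b hb)
  have hιA := hA.image iota
  have hιB := hB.image iota
  refine equiv_of_truncNum_le_add_one (sup_le_inf hιA hιB hAB) fun k => ?_
  have hsup := isGreatest_truncNum_sup hιA (fun x hx => hAB x hx _ hιB.some_mem) k
  have hinf := isLeast_truncNum_inf hιB (hAB _ hιA.some_mem) k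
  set n := truncNum (sup (iota '' A)) k
  have hq : truncNum (iota ((n + 1 : ℤ) / 10 ^ k)) k = n + 1 := truncNum_iota_div _ k
  rcases hdecimal (n + 1) k with hqA | hqB
  · have hq_le : n + 1 ≤ n := hq ▸ hsup.2 ⟨_, ⟨_, hqA, rfl⟩, rfl⟩
    omega
  · exact hq ▸ hinf.2 ⟨_, ⟨_, hqB, rfl⟩, rfl⟩

open DecimalRep in
/-- For every Dedekind cut `(A|B)`, `sup ι(A) ∼ inf ι(B)` in `(𝓡,⪯)`. -/
theorem sup_equiv_inf_of_dedekind_cut (A B : Set ℚ)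
    (hA : A.Nonempty) (hB : B.Nonempty)
    (hdisj : A ∩ B = ∅) (hunion : A ∪ B = Set.univ)
    (hlt : ∀ a ∈ A, ∀ b ∈ B, a < b)
    (hnomax : ∀ a ∈ A, ∃ a' ∈ A, a < a') :
    equiv (sup (iota '' A)) (inf (iota '' B)) :=
  sup_equiv_inf_of_dedekind_cut_general A B hA hB
    (fun _ _ => hunion ▸ Set.mem_univ _) fun a ha b hb => (hlt a ha b hb).le
end

section
/- For every Cauchy sequence (x⁽ⁿ⁾) of rational numbers, the lower limit of the sequence (ι(x⁽ⁿ⁾)) in (𝓡,⪯) is equivalent to its upper limit: sup{ inf{ι(x⁽ᵏ⁾) : k ≥ n} : n ∈ ℕ } ∼ inf{ sup{ι(x⁽ᵏ⁾) : k ≥ n} : n ∈ ℕ }. -/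
/-!
Scaling the `k`-th truncation by `10 ^ k` turns an element of `𝓡` into a sequence of integers, and
`⪯` into the pointwise order. A nonempty bounded set of integers has a greatest and a least
element, so at each level `k` the truncations of `sup` and `inf` are attained, and those of the
upper and lower limit are attained infinitely often. Along a Cauchy sequence the `k`-th truncations
eventually differ by at most one unit in the last place. Hence so do those of the two limits, and
no third element fits between two with this property: at a level where it differs from both, its
truncation would lie strictly between two integers at distance at most one.
-/

open Filter Set

namespace DecimalRep

section ScaledTrunc

variable {x y : DecimalRep} {j k : ℕ}

/-- The integer `10 ^ k * [x]_k`, whose decimal digits are those of `x` up to the `k`-th one.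
Working with it keeps comparisons of truncations within integer arithmetic. -/
def scaledTrunc (x : DecimalRep) : ℕ → ℤ
  | 0 => x.1
  | k + 1 => 10 * scaledTrunc x k + (x.2 k : ℕ)

lemma trunc_eq_scaledTrunc_div (x : DecimalRep) (k : ℕ) :
    trunc x k = scaledTrunc x k / 10 ^ k := by
  induction k with
  | zero => simp [trunc, scaledTrunc]
  | succ k ih =>
    have trunc_succ : trunc x (k + 1) = trunc x k + ((x.2 k : ℕ) : ℚ) / 10 ^ (k + 1) := by
      simp only [trunc, Finset.sum_range_succ, add_assoc]
    rw [trunc_succ, ih, scaledTrunc]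
    push_cast
    field_simp
    ring

lemma le_iff_scaledTrunc_le : le x y ↔ ∀ k, scaledTrunc x k ≤ scaledTrunc y k := by
  refine forall_congr' fun k => ?_
  rw [trunc_eq_scaledTrunc_div, trunc_eq_scaledTrunc_div,
    div_le_div_iff_of_pos_right (by positivity), Int.cast_le]

lemma scaledTrunc_succ_ediv_ten (x : DecimalRep) (k : ℕ) :
    scaledTrunc x (k + 1) / 10 = scaledTrunc x k := by
  have := (x.2 k).isLt
  rw [scaledTrunc]
  omega

lemma scaledTrunc_injective : Function.Injective scaledTrunc := by
  refine fun x y h => Prod.ext (congrFun h 0) (funext fun k => Fin.ext ?_)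
  have hk := congrFun h k
  have hk_succ := congrFun h (k + 1)
  simp only [scaledTrunc] at hk_succ
  omega

lemma exists_scaledTrunc_eq {a : ℕ → ℤ} (ha : ∀ k, a (k + 1) / 10 = a k) :
    ∃ x, scaledTrunc x = a := by
  refine ⟨(a 0, fun k => ⟨(a (k + 1) % 10).toNat, by omega⟩), funext fun k => ?_⟩
  induction k with
  | zero => rfl
  | succ k ih =>
    have := ha k
    rw [scaledTrunc, ih]
    dsimp only
    omega

lemma scaledTrunc_eq_of_le (hjk : j ≤ k) (h : scaledTrunc x k = scaledTrunc y k) :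
    scaledTrunc x j = scaledTrunc y j := by
  induction k, hjk using Nat.le_induction with
  | base => exact h
  | succ k _ ih =>
    exact ih (by rw [← scaledTrunc_succ_ediv_ten x, ← scaledTrunc_succ_ediv_ten y, h])

lemma scaledTrunc_lt (x : DecimalRep) (k : ℕ) : scaledTrunc x k < (x.1 + 1) * 10 ^ k := by
  induction k with
  | zero => simp [scaledTrunc]
  | succ k ih =>
    have := (x.2 k).isLt
    rw [scaledTrunc, pow_succ, ← mul_assoc]
    omega

lemma scaledTrunc_iota (α : ℚ) (k : ℕ) : scaledTrunc (iota α) k = ⌊α * 10 ^ k⌋ := by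
  induction k with
  | zero => simp [scaledTrunc, iota]
  | succ k ih =>
    have floor_ediv_ten : ⌊α * 10 ^ (k + 1)⌋ / 10 = ⌊α * 10 ^ k⌋ := by
      rw [pow_succ, ← mul_assoc]
      exact_mod_cast Int.mul_natCast_floor_div_cancel (n := 10) (by norm_num) (α * 10 ^ k)
    rw [scaledTrunc, ih]
    simp only [iota]
    omega

lemma scaledTrunc_psi (x : DecimalRep) (k : ℕ) :
    scaledTrunc (psi x) k = -scaledTrunc x k - 1 := by
  induction k with
  | zero => simp only [scaledTrunc, psi]; ring
  | succ k ih =>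
    have := (x.2 k).isLt
    rw [scaledTrunc, scaledTrunc, ih]
    simp only [psi]
    omega

lemma equiv_of_scaledTrunc_le_add_one (h : ∀ k, scaledTrunc x k ≤ scaledTrunc y k)
    (h' : ∀ k, scaledTrunc y k ≤ scaledTrunc x k + 1) : equiv x y := by
  rintro ⟨z, hzx, hzy, hz⟩
  simp only [le_iff_scaledTrunc_le] at hz
  obtain ⟨i, hi⟩ := Function.ne_iff.1 (scaledTrunc_injective.ne hzx)
  obtain ⟨j, hj⟩ := Function.ne_iff.1 (scaledTrunc_injective.ne hzy)
  have hzx_max : scaledTrunc z (max i j) ≠ scaledTrunc x (max i j) :=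
    mt (scaledTrunc_eq_of_le (le_max_left i j)) hi
  have hzy_max : scaledTrunc z (max i j) ≠ scaledTrunc y (max i j) :=
    mt (scaledTrunc_eq_of_le (le_max_right i j)) hj
  have hxy := h (max i j)
  have hyx := h' (max i j)
  rcases hz with ⟨hle, hge⟩ | ⟨hle, hge⟩
  all_goals
    have := hle (max i j)
    have := hge (max i j)
    omega

end ScaledTrunc

section Extrema

variable {W : Set DecimalRep} {M M' : DecimalRep}

lemma le_antisymm (h : le M M') (h' : le M' M) : M = M' :=
  scaledTrunc_injective <| funext fun k =>
    _root_.le_antisymm (le_iff_scaledTrunc_le.1 h k) (le_iff_scaledTrunc_le.1 h' k)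

lemma IsLub.sup_eq (h : IsLub W M) : sup W = M := by
  have hex : ∃ M, IsLub W M := ⟨M, h⟩
  rw [sup, dif_pos hex]
  exact le_antisymm (hex.choose_spec.2 M h.1) (h.2 _ hex.choose_spec.1)

lemma IsGlb.inf_eq (h : IsGlb W M) : inf W = M := by
  have hex : ∃ M, IsGlb W M := ⟨M, h⟩
  rw [inf, dif_pos hex]
  exact le_antisymm (h.2 _ hex.choose_spec.1) (hex.choose_spec.2 M h.1)

lemma isLub_of_isGreatest_scaledTrunc
    (h : ∀ k, IsGreatest ((scaledTrunc · k) '' W) (scaledTrunc M k)) : IsLub W M := by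
  refine ⟨fun w hw => le_iff_scaledTrunc_le.2 fun k => (h k).2 (mem_image_of_mem _ hw),
    fun B hB => le_iff_scaledTrunc_le.2 fun k => ?_⟩
  obtain ⟨w, hw, hwM⟩ := (h k).1
  exact hwM.ge.trans (le_iff_scaledTrunc_le.1 (hB w hw) k)

lemma isGlb_of_isLeast_scaledTrunc
    (h : ∀ k, IsLeast ((scaledTrunc · k) '' W) (scaledTrunc M k)) : IsGlb W M := by
  refine ⟨fun w hw => le_iff_scaledTrunc_le.2 fun k => (h k).2 (mem_image_of_mem _ hw),
    fun B hB => le_iff_scaledTrunc_le.2 fun k => ?_⟩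
  obtain ⟨w, hw, hwM⟩ := (h k).1
  exact (le_iff_scaledTrunc_le.1 (hB w hw) k).trans hwM.le

lemma bddAbove_image_scaledTrunc (hb : BddAbove (Prod.fst '' W)) (k : ℕ) :
    BddAbove ((scaledTrunc · k) '' W) := by
  obtain ⟨b, hb⟩ := hb
  refine ⟨(b + 1) * 10 ^ k, forall_mem_image.2 fun w hw => (scaledTrunc_lt w k).le.trans ?_⟩
  gcongr
  exact hb (mem_image_of_mem _ hw)

-- Division by ten is monotone, so it maps the greatest truncation at level `k + 1` to the one at
-- level `k`: the maxima fit together to a single decimal representation.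
lemma exists_isGreatest_scaledTrunc (hne : W.Nonempty) (hb : BddAbove (Prod.fst '' W)) :
    ∃ M, ∀ k, IsGreatest ((scaledTrunc · k) '' W) (scaledTrunc M k) := by
  have hmax (k : ℕ) : IsGreatest ((scaledTrunc · k) '' W) (sSup ((scaledTrunc · k) '' W)) :=
    have hbk := bddAbove_image_scaledTrunc hb k
    ⟨Int.csSup_mem (hne.image _) hbk, fun _ => le_csSup hbk⟩
  have ediv_ten_mono : Monotone fun n : ℤ => n / 10 :=
    fun _ _ h => Int.ediv_le_ediv (by norm_num) h
  obtain ⟨M, hM⟩ := exists_scaledTrunc_eq (a := fun k => sSup ((scaledTrunc · k) '' W)) fun k => by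
    have hmax_ediv := ediv_ten_mono.map_isGreatest (hmax (k + 1))
    simp only [image_image, scaledTrunc_succ_ediv_ten] at hmax_ediv
    exact hmax_ediv.unique (hmax k)
  exact ⟨M, fun k => hM ▸ hmax k⟩

lemma isGreatest_scaledTrunc_sup (hne : W.Nonempty) (hb : BddAbove (Prod.fst '' W)) (k : ℕ) :
    IsGreatest ((scaledTrunc · k) '' W) (scaledTrunc (sup W) k) := by
  obtain ⟨M, hM⟩ := exists_isGreatest_scaledTrunc hne hb
  rw [(isLub_of_isGreatest_scaledTrunc hM).sup_eq]
  exact hM k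

-- The order-reversing map `Ψ` exchanges least and greatest elements.
lemma exists_isLeast_scaledTrunc (hne : W.Nonempty) (hb : BddBelow (Prod.fst '' W)) :
    ∃ M, ∀ k, IsLeast ((scaledTrunc · k) '' W) (scaledTrunc M k) := by
  have neg_sub_one_anti : Antitone fun n : ℤ => -n - 1 := fun _ _ h => by dsimp only; omega
  have hb_psi : BddAbove (Prod.fst '' (psi '' W)) := by
    obtain ⟨b, hb⟩ := hb
    refine ⟨-1 - b, forall_mem_image.2 <| forall_mem_image.2 fun w hw => ?_⟩
    exact sub_le_sub_left (hb (mem_image_of_mem _ hw)) _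
  obtain ⟨M, hM⟩ := exists_isGreatest_scaledTrunc (hne.image psi) hb_psi
  refine ⟨psi M, fun k => ?_⟩
  simpa [image_image, scaledTrunc_psi] using neg_sub_one_anti.map_isGreatest (hM k)

lemma isLeast_scaledTrunc_inf (hne : W.Nonempty) (hb : BddBelow (Prod.fst '' W)) (k : ℕ) :
    IsLeast ((scaledTrunc · k) '' W) (scaledTrunc (inf W) k) := by
  obtain ⟨M, hM⟩ := exists_isLeast_scaledTrunc hne hb
  rw [(isGlb_of_isLeast_scaledTrunc hM).inf_eq]
  exact hM k

end Extrema

section Limits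

variable {f : ℕ → DecimalRep}

lemma upperLimit_eq_inf_range (f : ℕ → DecimalRep) :
    upperLimit f = inf (range fun n => sup (f '' Ici n)) := by
  simp only [upperLimit, range, image, mem_Ici, eq_comm]

lemma lowerLimit_eq_sup_range (f : ℕ → DecimalRep) :
    lowerLimit f = sup (range fun n => inf (f '' Ici n)) := by
  simp only [lowerLimit, range, image, mem_Ici, eq_comm]

lemma isGreatest_scaledTrunc_sup_tail (ha : BddAbove (range fun n => (f n).1)) (n k : ℕ) :
    IsGreatest ((fun m => scaledTrunc (f m) k) '' Ici n) (scaledTrunc (sup (f '' Ici n)) k) := by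
  have ha_tail : BddAbove (Prod.fst '' (f '' Ici n)) := by
    rw [image_image]
    exact ha.mono (image_subset_range _ _)
  simpa only [image_image] using isGreatest_scaledTrunc_sup (nonempty_Ici.image f) ha_tail k

lemma isLeast_scaledTrunc_inf_tail (hb : BddBelow (range fun n => (f n).1)) (n k : ℕ) :
    IsLeast ((fun m => scaledTrunc (f m) k) '' Ici n) (scaledTrunc (inf (f '' Ici n)) k) := by
  have hb_tail : BddBelow (Prod.fst '' (f '' Ici n)) := by
    rw [image_image]
    exact hb.mono (image_subset_range _ _)
  simpa only [image_image] using isLeast_scaledTrunc_inf (nonempty_Ici.image f) hb_tail k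

variable (ha : BddAbove (range fun n => (f n).1)) (hb : BddBelow (range fun n => (f n).1)) (k : ℕ)
include ha hb

lemma isLeast_scaledTrunc_upperLimit :
    IsLeast (range fun n => scaledTrunc (sup (f '' Ici n)) k) (scaledTrunc (upperLimit f) k) := by
  have hb_sup : BddBelow (Prod.fst '' range fun n => sup (f '' Ici n)) := by
    obtain ⟨b, hb⟩ := hb
    refine ⟨b, forall_mem_image.2 <| forall_mem_range.2 fun n => ?_⟩
    exact (hb (mem_range_self n)).trans
      ((isGreatest_scaledTrunc_sup_tail ha n 0).2 (mem_image_of_mem _ self_mem_Ici))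
  rw [upperLimit_eq_inf_range]
  simpa only [← range_comp, Function.comp_def] using
    isLeast_scaledTrunc_inf (range_nonempty _) hb_sup k

lemma isGreatest_scaledTrunc_lowerLimit :
    IsGreatest (range fun n => scaledTrunc (inf (f '' Ici n)) k)
      (scaledTrunc (lowerLimit f) k) := by
  have ha_inf : BddAbove (Prod.fst '' range fun n => inf (f '' Ici n)) := by
    obtain ⟨a, ha⟩ := ha
    refine ⟨a, forall_mem_image.2 <| forall_mem_range.2 fun n => ?_⟩
    exact ((isLeast_scaledTrunc_inf_tail hb n 0).2 (mem_image_of_mem _ self_mem_Ici)).trans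
      (ha (mem_range_self n))
  rw [lowerLimit_eq_sup_range]
  simpa only [← range_comp, Function.comp_def] using
    isGreatest_scaledTrunc_sup (range_nonempty _) ha_inf k

lemma eventually_scaledTrunc_le_upperLimit :
    ∀ᶠ n in atTop, scaledTrunc (f n) k ≤ scaledTrunc (upperLimit f) k := by
  obtain ⟨N, hN⟩ := (isLeast_scaledTrunc_upperLimit ha hb k).1
  filter_upwards [eventually_ge_atTop N] with n hn
  exact ((isGreatest_scaledTrunc_sup_tail ha N k).2 (mem_image_of_mem _ hn)).trans hN.le

lemma frequently_upperLimit_le_scaledTrunc :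
    ∃ᶠ n in atTop, scaledTrunc (upperLimit f) k ≤ scaledTrunc (f n) k := by
  refine frequently_atTop.2 fun N => ?_
  obtain ⟨n, hn, hmax⟩ := (isGreatest_scaledTrunc_sup_tail ha N k).1
  exact ⟨n, hn, ((isLeast_scaledTrunc_upperLimit ha hb k).2 (mem_range_self N)).trans hmax.ge⟩

lemma eventually_lowerLimit_le_scaledTrunc :
    ∀ᶠ n in atTop, scaledTrunc (lowerLimit f) k ≤ scaledTrunc (f n) k := by
  obtain ⟨N, hN⟩ := (isGreatest_scaledTrunc_lowerLimit ha hb k).1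
  filter_upwards [eventually_ge_atTop N] with n hn
  exact hN.ge.trans ((isLeast_scaledTrunc_inf_tail hb N k).2 (mem_image_of_mem _ hn))

lemma frequently_scaledTrunc_le_lowerLimit :
    ∃ᶠ n in atTop, scaledTrunc (f n) k ≤ scaledTrunc (lowerLimit f) k := by
  refine frequently_atTop.2 fun N => ?_
  obtain ⟨n, hn, hmin⟩ := (isLeast_scaledTrunc_inf_tail hb N k).1
  exact ⟨n, hn, hmin.le.trans ((isGreatest_scaledTrunc_lowerLimit ha hb k).2 (mem_range_self N))⟩

lemma scaledTrunc_lowerLimit_le_upperLimit :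
    scaledTrunc (lowerLimit f) k ≤ scaledTrunc (upperLimit f) k := by
  obtain ⟨n, hlower, hupper⟩ := ((eventually_lowerLimit_le_scaledTrunc ha hb k).and
    (eventually_scaledTrunc_le_upperLimit ha hb k)).exists
  exact hlower.trans hupper

end Limits

section Cauchy

variable {f : ℕ → DecimalRep}

/-- Cauchy sequences in `𝓡`: at each level `k`, the truncations eventually differ by at most one
unit in the last place. Eventual equality would be too strong: the expansions of rationals
approaching `1` from both sides alternate between `0.99⋯` and `1.00⋯`. -/
def IsCauchyRep (f : ℕ → DecimalRep) : Prop :=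
  ∀ k, ∃ N, ∀ m n, N ≤ m → N ≤ n → scaledTrunc (f m) k ≤ scaledTrunc (f n) k + 1

lemma IsCauchyRep.bddAbove_range_fst (hf : IsCauchyRep f) : BddAbove (range fun n => (f n).1) := by
  obtain ⟨N, hN⟩ := hf 0
  exact IsBoundedUnder.bddAbove_range
    ⟨_, eventually_map.2 <| (eventually_ge_atTop N).mono fun m hm => hN m N hm le_rfl⟩

lemma IsCauchyRep.bddBelow_range_fst (hf : IsCauchyRep f) : BddBelow (range fun n => (f n).1) := by
  obtain ⟨N, hN⟩ := hf 0
  exact IsBoundedUnder.bddBelow_range ⟨(f N).1 - 1, eventually_map.2 <|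
    (eventually_ge_atTop N).mono fun m hm => sub_le_iff_le_add.2 (hN N m le_rfl hm)⟩

lemma IsCauchyRep.scaledTrunc_upperLimit_le (hf : IsCauchyRep f) (k : ℕ) :
    scaledTrunc (upperLimit f) k ≤ scaledTrunc (lowerLimit f) k + 1 := by
  have ha := hf.bddAbove_range_fst
  have hb := hf.bddBelow_range_fst
  obtain ⟨N, hN⟩ := hf k
  obtain ⟨m, hm, hupper⟩ := frequently_atTop.1 (frequently_upperLimit_le_scaledTrunc ha hb k) N
  obtain ⟨n, hn, hlower⟩ := frequently_atTop.1 (frequently_scaledTrunc_le_lowerLimit ha hb k) N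
  calc scaledTrunc (upperLimit f) k ≤ scaledTrunc (f m) k := hupper
    _ ≤ scaledTrunc (f n) k + 1 := hN m n hm hn
    _ ≤ scaledTrunc (lowerLimit f) k + 1 := by gcongr

lemma IsCauchy.isCauchyRep_iota {x : ℕ → ℚ} (hx : IsCauchy x) :
    IsCauchyRep fun n => iota (x n) := by
  intro k
  obtain ⟨N, hN⟩ := hx (1 / 10 ^ k) (by positivity)
  refine ⟨N, fun m n hm hn => ?_⟩
  have hclose : x m - x n < 1 / 10 ^ k := (abs_lt.1 (hN m n hm hn)).2
  rw [lt_div_iff₀ (by positivity)] at hclose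
  rw [scaledTrunc_iota, scaledTrunc_iota, ← Int.floor_add_one]
  exact Int.floor_le_floor (by linarith)

end Cauchy

end DecimalRep

open DecimalRep in
theorem lowerLimit_equiv_upperLimit_of_cauchy_general (f : ℕ → DecimalRep) (hf : IsCauchyRep f) :
    equiv (lowerLimit f) (upperLimit f) :=
  equiv_of_scaledTrunc_le_add_one
    (scaledTrunc_lowerLimit_le_upperLimit hf.bddAbove_range_fst hf.bddBelow_range_fst)
    hf.scaledTrunc_upperLimit_le

open DecimalRep in
/-- For every Cauchy sequence of rationals, the lower limit of the sequence of
its decimal expansions is equivalent to the upper limit. -/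
theorem lowerLimit_equiv_upperLimit_of_cauchy (x : ℕ → ℚ) (hx : IsCauchy x) :
    equiv (lowerLimit fun n => iota (x n)) (upperLimit fun n => iota (x n)) :=
  lowerLimit_equiv_upperLimit_of_cauchy_general _ hx.isCauchyRep_iota
end
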